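/- Global kernel bound: there exists a constant c > 0 such that for every integer N ≥ 1 and all real x, y, |L^N(x,y)| ≤ c · N^{1/3}. -/

import Mathlib

open Real MeasureTheory Filter Set

/-- Physicists' Hermite polynomial `H_n(x) = (-1)^n e^{x^2} (d/dx)^n e^{-x^2}`. -/
noncomputable def hermiteP (n : ℕ) (x : ℝ) : ℝ :=
  (-1 : ℝ) ^ n * Real.exp (x ^ 2) * iteratedDeriv n (fun t => Real.exp (-t ^ 2)) x

/-- Oscillator wave function `ψ_n(x) = (√π 2^n n!)^{-1/2} e^{-x^2/2} H_n(x)`. -/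
noncomputable def osc (n : ℕ) (x : ℝ) : ℝ :=
  (Real.sqrt (Real.sqrt Real.pi * 2 ^ n * (n.factorial : ℝ)))⁻¹ *
    Real.exp (-x ^ 2 / 2) * hermiteP n x

/-- The kernel `K^N(x,y) = Σ_{k=0}^{N-1} ψ_k(x) ψ_k(y)`. -/
noncomputable def kerK (N : ℕ) (x y : ℝ) : ℝ :=
  ∑ k ∈ Finset.range N, osc k x * osc k y

/-- The rescaled kernel `L^N(x,y) = N^{-1/2} K^N(√N x, √N y)`. -/
noncomputable def kerL (N : ℕ) (x y : ℝ) : ℝ :=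
  (Real.sqrt (N : ℝ))⁻¹ * kerK N (Real.sqrt (N : ℝ) * x) (Real.sqrt (N : ℝ) * y)

/-!
The bound holds even with `1` in place of `N ^ (1 / 3)`. Write `G = K^n(x,x) + K^{n+1}(x,x)`. By
the ladder relations for `ψ_n`, the derivative of `G` telescopes to `-2xψ_n²`, so `G` is largest at
the origin. There `(n + 2)ψ_{n+2}(0)² = (n + 1)ψ_n(0)²` forces `ψ_n(0)² ≤ (n + 1)^{-1/2}`, whence
`K^n(x,x) = O(√n)` uniformly in `x`, and Cauchy-Schwarz passes from `K^n(x,x)` to `K^n(x,y)`.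
-/

lemma iteratedDeriv_succ_id_mul {𝕜 : Type*} [NontriviallyNormedField 𝕜] {n : ℕ} {f : 𝕜 → 𝕜}
    {x : 𝕜} (hf : ContDiffAt 𝕜 (n + 1 : ℕ) f x) :
    iteratedDeriv (n + 1) (fun t => t * f t) x =
      x * iteratedDeriv (n + 1) f x + (n + 1) * iteratedDeriv n f x := by
  have leibniz := iteratedDeriv_fun_mul (f := fun t : 𝕜 => t) contDiffAt_id hf
  have higher_eq_zero (i : ℕ) : iteratedDeriv (i + 2) (fun t : 𝕜 => t) x = 0 :=
    (iteratedDeriv_id (n := i + 2)).trans (by simp)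
  rw [leibniz, Finset.sum_range_succ', Finset.sum_range_succ', add_comm (x * _)]
  simp [higher_eq_zero]

lemma sum_range_inv_sqrt_succ_le (n : ℕ) :
    ∑ k ∈ Finset.range n, (√((k : ℝ) + 1))⁻¹ ≤ 2 * √(n : ℝ) := by
  induction n with
  | zero => simp
  | succ n ih =>
    have ht : 0 < √((n : ℝ) + 1) := by positivity
    have hs_sq : √(n : ℝ) ^ 2 = n := Real.sq_sqrt (by positivity)
    have ht_sq : √((n : ℝ) + 1) ^ 2 = n + 1 := Real.sq_sqrt (by positivity)
    have increment : (√((n : ℝ) + 1))⁻¹ ≤ 2 * (√((n : ℝ) + 1) - √(n : ℝ)) := by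
      rw [inv_le_iff_one_le_mul₀ ht]
      nlinarith [sq_nonneg (√((n : ℝ) + 1) - √(n : ℝ))]
    rw [Finset.sum_range_succ]
    push_cast
    linarith

lemma le_apply_of_hasDerivAt_of_sub_mul_nonpos {f f' : ℝ → ℝ} {a : ℝ}
    (hf : ∀ x, HasDerivAt f (f' x) x) (hf' : ∀ x, (x - a) * f' x ≤ 0) (x : ℝ) : f x ≤ f a := by
  have hdiff : Differentiable ℝ f := fun y => (hf y).differentiableAt
  refine isMaxOn_univ_of_deriv hdiff.continuous.continuousAt hdiff.differentiableOn
    hdiff.differentiableOn (fun y hy => ?_) (fun y hy => ?_) (mem_univ x)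
  · rw [(hf y).deriv]
    exact nonneg_of_mul_nonpos_right (hf' y) (sub_neg.2 hy)
  · rw [(hf y).deriv]
    exact nonpos_of_mul_nonpos_right (hf' y) (sub_pos.2 hy)

lemma hasDerivAt_exp_neg_sq (x : ℝ) :
    HasDerivAt (fun t : ℝ => Real.exp (-t ^ 2)) (-2 * (x * Real.exp (-x ^ 2))) x :=
  (hasDerivAt_pow 2 x).fun_neg.exp.congr_deriv (by push_cast; ring)

lemma iteratedDeriv_exp_neg_sq_add_two (n : ℕ) (x : ℝ) :
    iteratedDeriv (n + 2) (fun t : ℝ => Real.exp (-t ^ 2)) x =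
      -2 * (x * iteratedDeriv (n + 1) (fun t : ℝ => Real.exp (-t ^ 2)) x +
        (n + 1) * iteratedDeriv n (fun t : ℝ => Real.exp (-t ^ 2)) x) := by
  rw [iteratedDeriv_succ', funext fun t => (hasDerivAt_exp_neg_sq t).deriv,
    iteratedDeriv_const_mul_field, iteratedDeriv_succ_id_mul (by fun_prop)]

lemma hermiteP_zero (x : ℝ) : hermiteP 0 x = 1 := by
  simp [hermiteP, ← Real.exp_add]

lemma hermiteP_add_two (n : ℕ) (x : ℝ) :
    hermiteP (n + 2) x = 2 * x * hermiteP (n + 1) x - 2 * (n + 1) * hermiteP n x := by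
  simp only [hermiteP, iteratedDeriv_exp_neg_sq_add_two]
  ring

lemma hasDerivAt_hermiteP (n : ℕ) (x : ℝ) :
    HasDerivAt (hermiteP n) (2 * x * hermiteP n x - hermiteP (n + 1) x) x := by
  have gaussian_smooth : ContDiff ℝ (n + 1) fun t : ℝ => Real.exp (-t ^ 2) := by fun_prop
  have deriv_gaussian := (gaussian_smooth.differentiable_iteratedDeriv' n x).hasDerivAt
  rw [← iteratedDeriv_succ] at deriv_gaussian
  refine (((hasDerivAt_pow 2 x).exp.const_mul ((-1) ^ n)).mul deriv_gaussian).congr_deriv ?_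
  simp only [hermiteP]
  push_cast
  ring

lemma hasDerivAt_hermiteP_succ (n : ℕ) (x : ℝ) :
    HasDerivAt (hermiteP (n + 1)) (2 * (n + 1) * hermiteP n x) x :=
  (hasDerivAt_hermiteP (n + 1) x).congr_deriv (by rw [hermiteP_add_two]; ring)

/-- The normalisation constant of the oscillator wave function `ψ_n`; its recurrence in `n` produces
the coefficients of the ladder relations. -/
noncomputable def oscNorm (n : ℕ) : ℝ :=
  (√(√π * 2 ^ n * (n.factorial : ℝ)))⁻¹

lemma oscNorm_eq_sqrt_mul (n : ℕ) : oscNorm n = √(2 * ((n : ℝ) + 1)) * oscNorm (n + 1) := by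
  have radicand_succ : √π * 2 ^ (n + 1) * ((n + 1).factorial : ℝ) =
      2 * ((n : ℝ) + 1) * (√π * 2 ^ n * (n.factorial : ℝ)) := by
    rw [Nat.factorial_succ]
    push_cast
    ring
  rw [oscNorm, oscNorm, radicand_succ,
    Real.sqrt_mul (by positivity : 0 ≤ 2 * ((n : ℝ) + 1)), mul_inv, ← mul_assoc,
    mul_inv_cancel₀ (by positivity), one_mul]

lemma osc_eq_oscNorm_mul (n : ℕ) :
    osc n = fun x => oscNorm n * Real.exp (-x ^ 2 / 2) * hermiteP n x :=
  rfl

lemma hasDerivAt_const_mul_exp_neg_sq_half_mul {f : ℝ → ℝ} {f' x : ℝ} (c : ℝ)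
    (hf : HasDerivAt f f' x) :
    HasDerivAt (fun t => c * Real.exp (-t ^ 2 / 2) * f t)
      (c * Real.exp (-x ^ 2 / 2) * (f' - x * f x)) x := by
  have deriv_exponent : HasDerivAt (fun t : ℝ => -t ^ 2 / 2) (-x) x :=
    ((hasDerivAt_pow 2 x).fun_neg.div_const 2).congr_deriv (by push_cast; ring)
  exact ((deriv_exponent.exp.const_mul c).mul hf).congr_deriv (by ring)

lemma hasDerivAt_osc (n : ℕ) (x : ℝ) :
    HasDerivAt (osc n) (x * osc n x - √(2 * ((n : ℝ) + 1)) * osc (n + 1) x) x := by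
  simp only [osc_eq_oscNorm_mul]
  refine (hasDerivAt_const_mul_exp_neg_sq_half_mul _ (hasDerivAt_hermiteP n x)).congr_deriv ?_
  rw [oscNorm_eq_sqrt_mul]
  ring

lemma hasDerivAt_osc_succ (n : ℕ) (x : ℝ) :
    HasDerivAt (osc (n + 1)) (√(2 * ((n : ℝ) + 1)) * osc n x - x * osc (n + 1) x) x := by
  have hsq : √(2 * ((n : ℝ) + 1)) ^ 2 = 2 * (n + 1) := Real.sq_sqrt (by positivity)
  simp only [osc_eq_oscNorm_mul]
  refine (hasDerivAt_const_mul_exp_neg_sq_half_mul _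
    (hasDerivAt_hermiteP_succ n x)).congr_deriv ?_
  rw [oscNorm_eq_sqrt_mul n]
  linear_combination (-oscNorm (n + 1) * Real.exp (-x ^ 2 / 2) * hermiteP n x) * hsq

lemma osc_zero : osc 0 = fun x => oscNorm 0 * Real.exp (-x ^ 2 / 2) := by
  simp only [osc_eq_oscNorm_mul, hermiteP_zero, mul_one]

lemma hasDerivAt_osc_zero (x : ℝ) : HasDerivAt (osc 0) (-x * osc 0 x) x := by
  simpa [osc_zero, mul_comm] using
    hasDerivAt_const_mul_exp_neg_sq_half_mul (oscNorm 0) (hasDerivAt_const x 1)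

lemma hasDerivAt_osc_sq_add (n : ℕ) (x : ℝ) :
    HasDerivAt (fun t => osc n t ^ 2 + osc (n + 1) t ^ 2)
      (2 * x * (osc n x ^ 2 - osc (n + 1) x ^ 2)) x := by
  refine (((hasDerivAt_osc n x).pow 2).add ((hasDerivAt_osc_succ n x).pow 2)).congr_deriv ?_
  push_cast
  ring

lemma osc_zero_apply_zero_sq_le_one : osc 0 0 ^ 2 ≤ 1 := by
  have hπ : 1 ≤ √π := Real.one_le_sqrt.2 (by linarith [Real.pi_gt_three])
  have hosc : osc 0 0 ^ 2 = (√π)⁻¹ := by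
    simp [osc_zero, oscNorm]
  exact hosc.trans_le (inv_le_one_of_one_le₀ hπ)

lemma osc_one_apply_zero : osc 1 0 = 0 := by
  simpa using (hasDerivAt_osc 0 0).unique (hasDerivAt_osc_zero 0)

lemma add_two_mul_osc_add_two_apply_zero_sq (n : ℕ) :
    ((n : ℝ) + 2) * osc (n + 2) 0 ^ 2 = (n + 1) * osc n 0 ^ 2 := by
  have deriv_eq := (hasDerivAt_osc (n + 1) 0).unique (hasDerivAt_osc_succ n 0)
  have hsq := congrArg (· ^ 2) deriv_eq
  simp only [zero_mul, zero_sub, sub_zero, neg_sq, mul_pow] at hsq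
  rw [Real.sq_sqrt (by positivity), Real.sq_sqrt (by positivity)] at hsq
  push_cast at hsq
  linarith

lemma osc_apply_zero_sq_le (n : ℕ) : osc n 0 ^ 2 ≤ (√((n : ℝ) + 1))⁻¹ := by
  induction n using Nat.twoStepInduction with
  | zero => simpa using osc_zero_apply_zero_sq_le_one
  | one => simp [osc_one_apply_zero]
  | more n ih _ =>
    have sqrt_mul_sqrt_le : √((n : ℝ) + 1) * √((n : ℝ) + 3) ≤ n + 2 := by
      rw [← Real.sqrt_mul (by positivity), Real.sqrt_le_left (by positivity)]
      linarith
    have ratio_le : √((n : ℝ) + 1) / (n + 2) ≤ (√((n : ℝ) + 3))⁻¹ := by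
      rwa [div_le_iff₀ (by positivity), inv_mul_eq_div, le_div_iff₀ (by positivity)]
    calc osc (n + 2) 0 ^ 2 = (n + 1) * osc n 0 ^ 2 / (n + 2) := by
          rw [eq_div_iff (by positivity), mul_comm, add_two_mul_osc_add_two_apply_zero_sq]
      _ ≤ (n + 1) * (√((n : ℝ) + 1))⁻¹ / (n + 2) := by gcongr
      _ = √((n : ℝ) + 1) / (n + 2) := by rw [← div_eq_mul_inv, Real.div_sqrt]
      _ ≤ (√((n : ℝ) + 3))⁻¹ := ratio_le
      _ = (√(((n + 2 : ℕ) : ℝ) + 1))⁻¹ := by push_cast; ring_nf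

lemma kerK_self (n : ℕ) (x : ℝ) : kerK n x x = ∑ k ∈ Finset.range n, osc k x ^ 2 := by
  simp only [kerK, sq]

lemma kerK_succ_self (n : ℕ) (x : ℝ) : kerK (n + 1) x x = kerK n x x + osc n x ^ 2 := by
  rw [kerK_self, kerK_self, Finset.sum_range_succ]

lemma kerK_sq_le (n : ℕ) (x y : ℝ) : kerK n x y ^ 2 ≤ kerK n x x * kerK n y y := by
  rw [kerK_self, kerK_self]
  exact Finset.sum_mul_sq_le_sq_mul_sq _ _ _

lemma hasDerivAt_kerK_self_add_succ (n : ℕ) (x : ℝ) :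
    HasDerivAt (fun t => kerK n t t + kerK (n + 1) t t) (-2 * x * osc n x ^ 2) x := by
  induction n with
  | zero =>
    simp only [kerK_self, Finset.sum_range_zero, zero_add, Finset.sum_range_one]
    exact ((hasDerivAt_osc_zero x).pow 2).congr_deriv (by push_cast; ring)
  | succ n ih =>
    have recurrence : (fun t => kerK (n + 1) t t + kerK (n + 1 + 1) t t) = fun t =>
        (kerK n t t + kerK (n + 1) t t) + (osc n t ^ 2 + osc (n + 1) t ^ 2) := by
      funext t
      rw [kerK_succ_self (n + 1), kerK_succ_self n]
      ring
    rw [recurrence]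
    exact (ih.add (hasDerivAt_osc_sq_add n x)).congr_deriv (by ring)

lemma kerK_self_add_succ_le_apply_zero (n : ℕ) (x : ℝ) :
    kerK n x x + kerK (n + 1) x x ≤ kerK n 0 0 + kerK (n + 1) 0 0 :=
  le_apply_of_hasDerivAt_of_sub_mul_nonpos (hasDerivAt_kerK_self_add_succ n)
    (fun t => by nlinarith [sq_nonneg (t * osc n t)]) x

lemma kerK_apply_zero_le (n : ℕ) : kerK n 0 0 ≤ 2 * √(n : ℝ) := by
  rw [kerK_self]
  exact (Finset.sum_le_sum fun k _ => osc_apply_zero_sq_le k).trans (sum_range_inv_sqrt_succ_le n)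

lemma kerK_self_le (n : ℕ) (x : ℝ) : kerK n x x ≤ √(n : ℝ) + √((n : ℝ) + 1) := by
  have bound_succ := kerK_apply_zero_le (n + 1)
  push_cast at bound_succ
  linarith [kerK_self_add_succ_le_apply_zero n x, kerK_apply_zero_le n, kerK_succ_self n x,
    sq_nonneg (osc n x)]

lemma abs_kerK_le (n : ℕ) (x y : ℝ) : |kerK n x y| ≤ √(n : ℝ) + √((n : ℝ) + 1) := by
  refine abs_le_of_sq_le_sq ?_ (by positivity)
  calc kerK n x y ^ 2 ≤ kerK n x x * kerK n y y := kerK_sq_le n x y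
    _ ≤ (√(n : ℝ) + √((n : ℝ) + 1)) * (√(n : ℝ) + √((n : ℝ) + 1)) := by
      gcongr
      · rw [kerK_self]; positivity
      · exact kerK_self_le n x
      · exact kerK_self_le n y
    _ = (√(n : ℝ) + √((n : ℝ) + 1)) ^ 2 := (sq _).symm

theorem kernel_global_bound_general {N : ℕ} (hN : 1 ≤ N) (x y : ℝ) : |kerL N x y| ≤ 3 := by
  have hN' : (1 : ℝ) ≤ N := Nat.one_le_cast.2 hN
  have hsqrt : 0 < √(N : ℝ) := Real.sqrt_pos.2 (by linarith)
  have sqrt_succ_le : √((N : ℝ) + 1) ≤ 2 * √(N : ℝ) := by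
    rw [Real.sqrt_le_left (by positivity), mul_pow, Real.sq_sqrt (by positivity)]
    linarith
  rw [kerL, abs_mul, abs_of_pos (inv_pos.2 hsqrt), inv_mul_le_iff₀ hsqrt]
  linarith [abs_kerK_le N (√(N : ℝ) * x) (√(N : ℝ) * y)]

/-- Global kernel bound. -/
theorem kernel_global_bound :
    ∃ c : ℝ, 0 < c ∧ ∀ N : ℕ, 1 ≤ N → ∀ x y : ℝ,
      |kerL N x y| ≤ c * (N : ℝ) ^ ((1 : ℝ) / 3) := by
  refine ⟨3, by norm_num, fun N hN x y => (kernel_global_bound_general hN x y).trans ?_⟩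
  exact le_mul_of_one_le_right (by norm_num)
    (Real.one_le_rpow (Nat.one_le_cast.2 hN) (by norm_num))
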